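/- Let v₁, v₂ be integers with v₂ ≥ 2·v₁ ≥ 4 and (v₁,v₂) ∉ {(4,8),(5,10)}, and let 𝐯 = (v₁,v₂), 𝐤 = (2,2). Then D(𝐯,𝐤,2) = C(v₁,2) = v₁(v₁−1)/2. -/

import Mathlib

/-!
The blocks of a packing have distinct pairs as first components, which gives the upper bound
`v₁.choose 2`. A packing of that size assigns to each edge of the complete graph on `v₁` vertices
a pair of colours out of `v₂`, so that edges with a common vertex receive disjoint pairs and no
pair of colours is used twice (`IsColoring`). Hence `v₂ = 2 * v₁` suffices, up to the exceptions.

For `v₁ ≤ 6` such colourings are written down. For `v₁ ≥ 7` let `n` be the odd one of `v₁` and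
`v₁ - 1`. A Room square of side `n` arranges the edges of the complete graph on `n + 1` vertices
in an `n × n` array, one edge per occupied cell, each vertex once in every row and column; using
the `n` rows and `n` columns as colours gives the colouring (`RoomOn.isColoring`).

Room squares exist for every odd side `2u + 1 ≥ 7` (`room_odd`). They are treated as pairs of
orthogonal commutative idempotent quasigroups (`RoomOn`). For most small `u` a strong starter in
`ℤ/(2u+1)` is given (`room_of_starter`), and side 9 is given by a table. For the other `u`, write
`u = 5m + t` with `m` coprime to 6 and `t = 0` or `3 ≤ t ≤ m`. A transversal design with six groups
of size `m`, the last one truncated to `t` points, has all its blocks of size 5 or 6. Double every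
point and add a point at infinity: the Room squares of sides `2m + 1` and `2t + 1` on the groups
with infinity and the Room frames of types `2 ^ 5` and `2 ^ 6` on the blocks combine to a Room
square of side `2u + 1` (`room_glue`).
-/

open Finset

/-- A `t`-`(𝐯,𝐤,λ)` generalized packing: a multiset of blocks `B` with `|B i| = k i`,
such that for every `(𝐤,t)`-admissible tuple `t'` and every tuple of sets `T` with
`|T i| = t' i`, at most `lam` blocks contain `T` componentwise. -/
def IsGenPacking {ι : Type} [Fintype ι] [DecidableEq ι] (t lam : ℕ) (v k : ι → ℕ)
    (P : Multiset (∀ i : ι, Finset (Fin (v i)))) : Prop :=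
  (∀ B ∈ P, ∀ i, (B i).card = k i) ∧
  ∀ t' : ι → ℕ, (∀ i, t' i ≤ k i) → (∑ i, t' i) = t →
    ∀ T : ∀ i : ι, Finset (Fin (v i)), (∀ i, (T i).card = t' i) →
      (P.filter (fun B => ∀ i, T i ⊆ B i)).card ≤ lam

/-- The generalized packing number `D_λ(𝐯,𝐤,t)`. -/
noncomputable def genPackingNumber (ι : Type) [Fintype ι] [DecidableEq ι] (t lam : ℕ) (v k : ι → ℕ) : ℕ :=
  sSup {N | ∃ P, IsGenPacking t lam v k P ∧ Multiset.card P = N}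

/-- The ordinary packing number `D_λ(v,k,t)`, as the case `m = 1`. -/
noncomputable def ordPackingNumber (v k t lam : ℕ) : ℕ :=
  genPackingNumber (Fin 1) t lam (fun _ => v) (fun _ => k)

/-! ### Idempotent Room squares -/

/-- `op` is a commutative idempotent quasigroup operation on the finite set `s`; its behaviour
outside `s` is irrelevant. Equivalently, `x, y ↦ op x y` colours the edges of the complete graph
on `s` so that each colour class `c ∈ s` is a matching that misses the vertex `c`. -/
structure IsCIQ {α : Type*} (s : Finset α) (op : α → α → α) : Prop where
  mem : ∀ x ∈ s, ∀ y ∈ s, op x y ∈ s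
  comm : ∀ x ∈ s, ∀ y ∈ s, op x y = op y x
  idem : ∀ x ∈ s, op x x = x
  inj : ∀ x ∈ s, ∀ y ∈ s, ∀ z ∈ s, op x y = op x z → y = z

/-- A standardised Room square on `s`, as a pair of orthogonal commutative idempotent quasigroups:
`f x y` and `g x y` are the row and the column of the cell that holds the unordered pair `{x, y}`,
and the diagonal cell `(x, x)` is reserved for `x` and the point at infinity. -/
structure RoomOn {α : Type*} (s : Finset α) (f g : α → α → α) : Prop where
  left : IsCIQ s f
  right : IsCIQ s g
  orth : ∀ x ∈ s, ∀ y ∈ s, ∀ x' ∈ s, ∀ y' ∈ s, f x y = f x' y' → g x y = g x' y' →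
    (x = x' ∧ y = y') ∨ (x = y' ∧ y = x')

/-- There is a Room square of side `n`. -/
def Room (n : ℕ) : Prop := ∃ f g : ℕ → ℕ → ℕ, RoomOn (range n) f g

lemma IsCIQ.transfer {α β : Type*} {s : Finset α} {t : Finset β} {op : α → α → α}
    (h : IsCIQ s op) (φ : α → β) (ψ : β → α) (hφ : ∀ x ∈ s, φ x ∈ t ∧ ψ (φ x) = x)
    (hψ : ∀ y ∈ t, ψ y ∈ s ∧ φ (ψ y) = y) : IsCIQ t (fun x y => φ (op (ψ x) (ψ y))) where
  mem x hx y hy := (hφ _ (h.mem _ (hψ x hx).1 _ (hψ y hy).1)).1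
  comm x hx y hy := by rw [h.comm _ (hψ x hx).1 _ (hψ y hy).1]
  idem x hx := by rw [h.idem _ (hψ x hx).1, (hψ x hx).2]
  inj x hx y hy z hz e := by
    have e' := congrArg ψ e
    rw [(hφ _ (h.mem _ (hψ x hx).1 _ (hψ y hy).1)).2,
      (hφ _ (h.mem _ (hψ x hx).1 _ (hψ z hz).1)).2] at e'
    have := h.inj _ (hψ x hx).1 _ (hψ y hy).1 _ (hψ z hz).1 e'
    rw [← (hψ y hy).2, ← (hψ z hz).2, this]

lemma RoomOn.transfer {α β : Type*} {s : Finset α} {t : Finset β} {f g : α → α → α}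
    (h : RoomOn s f g) (φ : α → β) (ψ : β → α) (hφ : ∀ x ∈ s, φ x ∈ t ∧ ψ (φ x) = x)
    (hψ : ∀ y ∈ t, ψ y ∈ s ∧ φ (ψ y) = y) :
    RoomOn t (fun x y => φ (f (ψ x) (ψ y))) (fun x y => φ (g (ψ x) (ψ y))) where
  left := h.left.transfer φ ψ hφ hψ
  right := h.right.transfer φ ψ hφ hψ
  orth x hx y hy x' hx' y' hy' e₁ e₂ := by
    have e₁' := congrArg ψ e₁
    have e₂' := congrArg ψ e₂
    rw [(hφ _ (h.left.mem _ (hψ x hx).1 _ (hψ y hy).1)).2,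
      (hφ _ (h.left.mem _ (hψ x' hx').1 _ (hψ y' hy').1)).2] at e₁'
    rw [(hφ _ (h.right.mem _ (hψ x hx).1 _ (hψ y hy).1)).2,
      (hφ _ (h.right.mem _ (hψ x' hx').1 _ (hψ y' hy').1)).2] at e₂'
    have key := h.orth _ (hψ x hx).1 _ (hψ y hy).1 _ (hψ x' hx').1 _ (hψ y' hy').1 e₁' e₂'
    have inv : ∀ a ∈ t, ∀ b ∈ t, ψ a = ψ b → a = b := fun a ha b hb e => by
      rw [← (hψ a ha).2, ← (hψ b hb).2, e]
    rcases key with ⟨a, b⟩ | ⟨a, b⟩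
    · exact Or.inl ⟨inv _ hx _ hx' a, inv _ hy _ hy' b⟩
    · exact Or.inr ⟨inv _ hx _ hy' a, inv _ hy _ hx' b⟩

/-- Whether a set carries a Room square depends only on its cardinality. -/
lemma RoomOn.of_card_eq {α β : Type*} {s : Finset α} {t : Finset β} {f g : α → α → α}
    [Nonempty α] [Nonempty β] (h : RoomOn s f g) (hc : s.card = t.card) :
    ∃ f' g' : β → β → β, RoomOn t f' g' := by
  classical
  let e : s ≃ t := Finset.equivOfCardEq hc
  let φ : α → β := fun x => if hx : x ∈ s then (e ⟨x, hx⟩ : β) else Classical.arbitrary β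
  let ψ : β → α := fun y => if hy : y ∈ t then (e.symm ⟨y, hy⟩ : α) else Classical.arbitrary α
  exact ⟨_, _, h.transfer φ ψ (fun x hx => by simp [φ, ψ, hx]) (fun y hy => by simp [φ, ψ, hy])⟩

/-! ### Room squares from strong starters -/

/-- A strong starter in `ℤ/(2u+1)` is encoded by `a`: the starter pair with difference `d` is
`{a d, a d + d}`. It yields a Room square whose first quasigroup is the mean `(x + y) / 2`,
halving being multiplication by `u + 1`. -/
lemma room_of_starter (u : ℕ) (a : ZMod (2 * u + 1) → ZMod (2 * u + 1)) (h0 : a 0 = 0)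
    (hneg : ∀ d, a (-d) = a d + d) (hinj : Function.Injective a)
    (hsum : ∀ d d', 2 * a d + d = 2 * a d' + d' → d = d' ∨ d = -d') : Room (2 * u + 1) := by
  have htwo : (2 : ZMod (2 * u + 1)) * (u + 1) = 1 := by
    have : ((2 * u + 1 : ℕ) : ZMod (2 * u + 1)) = 0 := ZMod.natCast_self _
    push_cast at this
    linear_combination this
  have hhalf : ∀ x y : ZMod (2 * u + 1), x * (u + 1) = y * (u + 1) → x = y := fun x y h => by
    linear_combination 2 * h + (y - x) * htwo
  have key : RoomOn (univ : Finset (ZMod (2 * u + 1))) (fun x y => (x + y) * (u + 1))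
      (fun x y => x - a (y - x)) := by
    have hcomm : ∀ x y, x - a (y - x) = y - a (x - y) := fun x y => by
      have := hneg (x - y)
      rw [neg_sub] at this
      rw [this]; ring
    refine ⟨⟨fun _ _ _ _ => mem_univ _, fun x _ y _ => by simp only [add_comm x y], fun x _ => ?_,
      fun x _ y _ z _ h => ?_⟩, ⟨fun _ _ _ _ => mem_univ _, fun x _ y _ => hcomm x y,
      fun x _ => by simp [h0], fun x _ y _ z _ h => ?_⟩, fun x _ y _ x' _ y' _ h₁ h₂ => ?_⟩
    · linear_combination x * htwo
    · exact add_left_cancel (hhalf _ _ h)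
    · have := hinj (sub_right_injective h)
      exact sub_left_injective this
    · have h₁ := hhalf _ _ h₁
      have := hsum (y - x) (y' - x') (by linear_combination h₁ - 2 * h₂)
      rcases this with h | h
      · rw [h] at h₂
        have hx : x = x' := by linear_combination h₂
        exact Or.inl ⟨hx, by linear_combination h + hx⟩
      · rw [hcomm x y] at h₂
        have h' : x - y = y' - x' := by linear_combination -h
        rw [h'] at h₂
        have hx : y = x' := by linear_combination h₂
        exact Or.inr ⟨by linear_combination h' + hx, hx⟩
  exact key.of_card_eq (by simp [ZMod.card])

/-- The starter pairs encoded by the list `L` of length `u`: for `1 ≤ d ≤ u` the `d`-th entry of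
`0 :: L` is the first element of the pair with difference `d`. The value at a larger `d`, which
stands for `-(2u+1-d)`, is the other element of the pair with difference `2u+1-d`. -/
def starterFun (L : List ℕ) (d : ℕ) : ℕ :=
  if d ≤ L.length then (0 :: L).getD d 0
  else ((0 :: L).getD (2 * L.length + 1 - d) 0 + (2 * L.length + 1 - d)) % (2 * L.length + 1)

/-- Whether the entries of the list are distinct and none of them is a position of a binary digit
`1` of `mask`. This is a linear-time test, with a bit mask as the set of entries seen so far. -/
def nodupMask : List ℕ → ℕ → Bool
  | [], _ => true
  | a :: l, mask => !(mask.testBit a) && nodupMask l (mask ||| 2 ^ a)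

lemma nodup_of_nodupMask : ∀ (l : List ℕ) (mask : ℕ), nodupMask l mask = true →
    l.Nodup ∧ ∀ a ∈ l, mask.testBit a = false
  | [], _, _ => by simp
  | a :: l, mask, h => by
    rw [nodupMask, Bool.and_eq_true, Bool.not_eq_true'] at h
    obtain ⟨h₁, h₂⟩ := nodup_of_nodupMask l _ h.2
    simp only [Nat.testBit_or, Nat.testBit_two_pow, Bool.or_eq_false_iff,
      decide_eq_false_iff_not] at h₂
    refine ⟨List.nodup_cons.2 ⟨fun ha => (h₂ a ha).2 rfl, h₁⟩, fun b hb => ?_⟩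
    rcases List.mem_cons.1 hb with rfl | hb
    · exact h.1
    · exact (h₂ b hb).1

/-- `L` encodes a strong starter: the elements of the pairs are distinct and non-zero, and so are
the sums of the pairs. -/
def starterOK (L : List ℕ) : Bool :=
  nodupMask ((List.range (2 * L.length + 1)).map (starterFun L)) 0 &&
  L.all (fun a => decide (a < 2 * L.length + 1)) &&
  nodupMask ((List.range (L.length + 1)).map
    (fun d => (2 * starterFun L d + d) % (2 * L.length + 1))) 0

lemma inj_of_nodup_map {n : ℕ} {f : ℕ → ℕ} (h : ((List.range n).map f).Nodup) {i j : ℕ}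
    (hi : i < n) (hj : j < n) (e : f i = f j) : i = j :=
  List.inj_on_of_nodup_map h (List.mem_range.2 hi) (List.mem_range.2 hj) e

lemma room_of_starterOK (L : List ℕ) (hL : starterOK L = true) : Room (2 * L.length + 1) := by
  simp only [starterOK, Bool.and_eq_true, List.all_eq_true, decide_eq_true_eq] at hL
  obtain ⟨⟨h₁, h₂⟩, h₃⟩ := hL
  replace h₁ := (nodup_of_nodupMask _ _ h₁).1
  replace h₃ := (nodup_of_nodupMask _ _ h₃).1
  have hlt : ∀ d, starterFun L d < 2 * L.length + 1 := by
    intro d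
    unfold starterFun
    split_ifs with h
    · rcases d with _ | d
      · simp
      · have : d < L.length := h
        simpa [this] using h₂ _ (List.getElem_mem this)
    · exact Nat.mod_lt _ (by omega)
  generalize hu : L.length = u at *
  have hhigh : ∀ d, 1 ≤ d → d ≤ u → starterFun L (2 * u + 1 - d) =
      (starterFun L d + d) % (2 * u + 1) := by
    intro d h1 h2
    have h3 : ¬ 2 * u + 1 - d ≤ u := by omega
    have h4 : 2 * u + 1 - (2 * u + 1 - d) = d := by omega
    simp only [starterFun, hu, h3, h2, h4, if_true, if_false]
  let a : ZMod (2 * u + 1) → ZMod (2 * u + 1) := fun d => (starterFun L d.val : ℕ)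
  have hneg_low : ∀ d : ZMod (2 * u + 1), d.val ≤ u → a (-d) = a d + d := by
    intro d hd
    by_cases h0 : d = 0
    · subst h0; simp
    have hpos : 1 ≤ d.val := Nat.one_le_iff_ne_zero.2 (by rwa [Ne, ZMod.val_eq_zero])
    have : (-d).val = 2 * u + 1 - d.val := by rw [ZMod.neg_val, if_neg h0]
    simp only [a, this, hhigh _ hpos hd, ZMod.natCast_mod]
    push_cast
    rw [ZMod.natCast_zmod_val]
  have hlow : ∀ d : ZMod (2 * u + 1), d.val ≤ u ∨ (-d).val ≤ u := by
    intro d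
    by_cases h0 : d = 0
    · subst h0; simp
    rw [ZMod.neg_val, if_neg h0]
    omega
  have hneg : ∀ d, a (-d) = a d + d := by
    intro d
    rcases hlow d with h | h
    · exact hneg_low d h
    · have := hneg_low (-d) h
      rw [neg_neg] at this
      rw [this]; ring
  have hval : ∀ d : ZMod (2 * u + 1), d.val < 2 * u + 1 := fun d => ZMod.val_lt d
  have hsum_low : ∀ d d' : ZMod (2 * u + 1), d.val ≤ u → d'.val ≤ u →
      2 * a d + d = 2 * a d' + d' → d = d' := by
    intro d d' hd hd' e
    apply ZMod.val_injective
    apply inj_of_nodup_map h₃ (Nat.lt_succ_of_le hd) (Nat.lt_succ_of_le hd')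
    rw [← ZMod.natCast_eq_natCast_iff']
    push_cast
    simpa [a] using e
  refine room_of_starter u a (by simp [a, starterFun]) hneg (fun d d' e => ?_) (fun d d' e => ?_)
  · apply ZMod.val_injective
    apply inj_of_nodup_map h₁ (hval d) (hval d')
    have := (ZMod.natCast_eq_natCast_iff' _ _ _).1 e
    rwa [Nat.mod_eq_of_lt (hlt _), Nat.mod_eq_of_lt (hlt _)] at this
  · have hs : ∀ x, 2 * a (-x) + -x = 2 * a x + x := fun x => by rw [hneg]; ring
    rcases hlow d with h | h <;> rcases hlow d' with h' | h'
    · exact Or.inl (hsum_low _ _ h h' e)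
    · exact Or.inr (hsum_low _ _ h h' (by rw [hs, e]))
    · exact Or.inr (by rw [← hsum_low _ _ h h' (by rw [hs, e]), neg_neg])
    · exact Or.inl (neg_injective (hsum_low _ _ h h' (by rw [hs, hs, e])))

/-- Strong starters in `ℤ/(2u+1)` for the small `u ≠ 4` that the recursive construction misses
(there is none in `ℤ/9`), one list of length `u` each. -/
def starters : List (List ℕ) := [
  [2, 4, 5],
  [8, 4, 2, 10, 7],
  [3, 5, 9, 10, 6, 2],
  [5, 7, 10, 12, 14, 2, 11],
  [3, 14, 8, 9, 5, 1, 12, 15],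
  [8, 1, 12, 10, 2, 17, 11, 5, 16],
  [1, 18, 10, 4, 11, 6, 17, 7, 5, 9],
  [17, 11, 7, 12, 22, 2, 19, 20, 6, 14, 21],
  [1, 15, 21, 5, 3, 10, 6, 11, 14, 12, 18, 20],
  [12, 20, 23, 6, 24, 3, 11, 8, 5, 15, 17, 19, 21],
  [13, 21, 7, 15, 22, 28, 2, 8, 17, 25, 1, 20, 11, 4],
  [25, 15, 13, 5, 18, 22, 1, 11, 24, 27, 3, 29, 30, 7, 20],
  [29, 6, 32, 13, 20, 15, 16, 18, 5, 27, 1, 31, 11, 28, 7, 3],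
  [11, 19, 15, 25, 5, 7, 20, 28, 8, 31, 23, 32, 26, 24, 22, 14, 16],
  [6, 26, 11, 20, 35, 23, 32, 30, 12, 9, 16, 33, 5, 36, 10, 15, 17, 4],
  [36, 32, 10, 18, 23, 27, 9, 3, 5, 21, 19, 8, 2, 29, 25, 35, 7, 38, 26],
  [28, 36, 16, 22, 20, 31, 32, 1, 6, 34, 7, 5, 40, 13, 8, 14, 35, 33, 2, 4],
  [12, 40, 19, 1, 15, 10, 24, 26, 9, 35, 27, 17, 36, 25, 32, 7, 37, 28, 14, 21, 30],
  [17, 40, 25, 11, 9, 24, 31, 43, 3, 19, 39, 32, 34, 22, 20, 7, 4, 8, 27, 41, 37, 33],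
  [17, 32, 3, 21, 39, 2, 24, 22, 11, 4, 29, 26, 41, 42, 37, 19, 45, 10, 27, 43, 12, 1, 13],
  [32, 11, 39, 4, 45, 28, 48, 38, 16, 14, 18, 31, 2, 47, 7, 21, 10, 23, 17, 20, 5, 30, 35, 44],
  [7, 16, 35, 39, 20, 41, 21, 4, 42, 52, 3, 24, 19, 30, 34, 1, 10, 46, 29, 13, 2, 37, 22, 26,
   15, 5],
  [46, 35, 24, 4, 53, 48, 21, 31, 9, 26, 23, 17, 38, 42, 5, 6, 52, 50, 25, 10, 49, 19, 43, 33,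
   7, 45, 40],
  [37, 53, 32, 60, 42, 46, 11, 12, 6, 17, 19, 13, 10, 14, 56, 50, 51, 31, 26, 21, 44, 40, 34,
   24, 54, 59, 43, 33, 29, 9, 36],
  [23, 35, 13, 41, 3, 51, 56, 22, 20, 54, 4, 34, 12, 28, 44, 5, 32, 58, 19, 52, 39, 9, 43, 2,
   36, 53, 48, 27, 33, 17, 40, 18],
  [50, 61, 6, 19, 22, 1, 36, 41, 57, 60, 14, 12, 4, 45, 31, 38, 52, 21, 13, 10, 34, 26, 62, 11,
   47, 16, 29, 37, 15, 28, 33, 8, 20],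
  [35, 62, 29, 51, 10, 37, 40, 58, 19, 49, 2, 5, 41, 20, 45, 30, 61, 63, 8, 22, 52, 1, 67, 48,
   68, 7, 11, 25, 56, 14, 26, 18, 6, 31],
  [37, 61, 68, 16, 28, 9, 41, 27, 14, 42, 69, 24, 72, 53, 40, 6, 4, 44, 56, 31, 29, 54, 34, 46,
   58, 66, 59, 11, 1, 17, 18, 32, 65, 26, 43, 45],
  [67, 57, 26, 48, 44, 64, 16, 35, 71, 73, 63, 39, 9, 62, 32, 25, 28, 20, 12, 4, 13, 15, 69, 36,
   40, 55, 58, 66, 21, 3, 46, 54, 72, 27, 7, 53, 56],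
  [5, 72, 22, 60, 34, 36, 56, 23, 79, 47, 43, 20, 67, 71, 3, 10, 13, 52, 19, 75, 68, 11, 61, 45,
   48, 76, 51, 49, 82, 28, 9, 21, 4, 7, 27, 14, 29, 65, 44, 46, 81, 17, 12],
  [81, 65, 22, 24, 45, 46, 29, 6, 53, 68, 75, 26, 42, 34, 8, 27, 2, 70, 83, 80, 33, 76, 7, 32,
   84, 73, 39, 77, 64, 44, 41, 31, 57, 37, 69, 49, 87, 21, 40, 61, 17, 18, 51, 3],
  [33, 64, 82, 71, 67, 11, 21, 80, 59, 53, 50, 84, 25, 40, 1, 13, 18, 27, 41, 56, 74, 83, 19,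
   90, 37, 43, 73, 20, 3, 47, 24, 81, 89, 2, 30, 70, 49, 79, 39, 6, 58, 10, 44, 7, 12],
  [29, 10, 69, 14, 31, 53, 61, 39, 56, 76, 62, 38, 2, 19, 84, 88, 4, 63, 41, 51, 5, 42, 87, 46,
   24, 75, 7, 16, 89, 55, 43, 58, 80, 91, 22, 66, 79, 45, 13, 27, 92, 54, 35, 77, 37, 48],
  [45, 19, 10, 87, 22, 37, 26, 31, 29, 4, 50, 48, 15, 53, 83, 58, 72, 78, 52, 84, 55, 85, 63,
   18, 56, 66, 79, 69, 20, 32, 88, 41, 68, 36, 40, 93, 57, 44, 25, 90, 77, 5, 16, 7, 80, 8, 65],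
  [66, 42, 71, 57, 50, 31, 78, 40, 86, 41, 23, 52, 56, 58, 90, 12, 13, 4, 20, 96, 79, 62, 91,
   35, 87, 54, 88, 25, 94, 81, 16, 76, 49, 65, 38, 7, 92, 68, 6, 93, 89, 60, 83, 63, 1, 75, 77,
   70],
  [59, 69, 34, 7, 53, 76, 50, 62, 92, 86, 21, 42, 33, 31, 40, 49, 63, 12, 93, 18, 68, 19, 74, 5,
   56, 77, 87, 67, 98, 78, 8, 94, 72, 75, 17, 83, 14, 26, 84, 3, 47, 79, 23, 91, 16, 44, 1, 25,
   85],
  [32, 63, 74, 58, 70, 9, 18, 47, 12, 13, 50, 39, 28, 89, 52, 30, 85, 93, 29, 88, 5, 76, 31, 80,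
   82, 69, 64, 40, 92, 53, 87, 34, 38, 86, 90, 73, 35, 22, 78, 56, 4, 42, 14, 94, 36, 99, 97,
   11, 79, 100],
  [34, 48, 73, 40, 60, 88, 93, 62, 42, 4, 67, 33, 7, 61, 59, 97, 36, 54, 18, 3, 101, 69, 58, 22,
   5, 98, 52, 11, 83, 86, 84, 25, 102, 96, 28, 56, 1, 80, 2, 89, 68, 43, 47, 55, 87, 49, 64, 71,
   17, 77, 31],
  [86, 7, 77, 18, 53, 103, 21, 49, 25, 23, 90, 29, 30, 50, 84, 79, 89, 60, 102, 54, 92, 63, 15,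
   76, 36, 45, 19, 42, 6, 66, 52, 56, 65, 10, 5, 12, 82, 91, 69, 27, 31, 20, 75, 11, 97, 47, 26,
   59, 32, 94, 17, 104],
  [63, 5, 18, 62, 46, 86, 23, 57, 17, 79, 32, 13, 35, 101, 104, 68, 85, 88, 97, 29, 78, 61, 44,
   34, 70, 56, 100, 45, 105, 39, 41, 90, 54, 3, 103, 60, 16, 4, 55, 36, 77, 75, 28, 6, 14, 1,
   98, 81, 91, 2, 80, 74, 40],
  [34, 43, 90, 19, 97, 74, 1, 83, 16, 17, 107, 46, 60, 63, 5, 76, 47, 37, 7, 81, 38, 82, 99, 84,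
   50, 2, 67, 51, 12, 14, 30, 4, 86, 22, 53, 62, 31, 49, 33, 66, 24, 6, 95, 105, 85, 32, 42, 52,
   54, 70, 18, 96, 71, 3],
  [67, 24, 62, 86, 101, 36, 57, 22, 51, 102, 99, 46, 19, 29, 33, 75, 53, 20, 28, 109, 105, 73,
   2, 59, 12, 108, 94, 61, 63, 50, 96, 87, 41, 84, 79, 9, 15, 11, 72, 107, 82, 78, 55, 44, 71,
   35, 56, 69, 17, 54, 93, 100, 23, 77, 85, 97],
  [58, 50, 11, 63, 41, 23, 103, 9, 64, 94, 10, 106, 30, 83, 81, 114, 34, 39, 37, 92, 27, 99, 85,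
   55, 86, 42, 13, 5, 90, 77, 62, 102, 65, 44, 18, 95, 54, 38, 74, 61, 100, 7, 28, 31, 2, 36,
   88, 22, 60, 66, 72, 32, 87, 35, 105, 24, 12],
  [127, 23, 89, 42, 93, 2, 48, 10, 67, 69, 49, 117, 9, 101, 4, 118, 24, 112, 78, 37, 90, 102,
   16, 27, 85, 74, 7, 53, 121, 26, 21, 45, 61, 75, 29, 44, 62, 58, 86, 107, 122, 30, 132, 59,
   71, 68, 108, 119, 91, 38, 3, 126, 31, 82, 65, 50, 95, 113, 123, 6, 87, 11, 70, 104, 105, 83,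
   131],
  [123, 93, 154, 57, 146, 104, 28, 88, 63, 58, 37, 140, 20, 94, 4, 91, 38, 120, 59, 45, 116, 79,
   17, 105, 87, 99, 71, 39, 90, 106, 44, 117, 156, 126, 147, 6, 102, 134, 46, 115, 81, 9, 130,
   74, 7, 142, 2, 73, 64, 145, 133, 141, 128, 148, 21, 150, 54, 132, 153, 26, 5, 8, 80, 50, 135,
   18, 60, 15, 62, 158, 144, 10, 24, 3, 100, 27, 32, 11, 92],
  [139, 104, 129, 49, 38, 76, 39, 92, 22, 120, 62, 67, 143, 127, 13, 138, 108, 75, 8, 126, 78,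
   128, 57, 85, 124, 61, 59, 95, 133, 5, 83, 103, 157, 37, 30, 6, 145, 3, 137, 102, 10, 74, 91,
   68, 44, 14, 148, 117, 9, 2, 70, 20, 48, 147, 131, 7, 24, 26, 54, 45, 136, 96, 110, 152, 90,
   159, 160, 111, 50, 107, 47, 122, 144, 23, 19, 77, 11, 115, 151, 98],
  [97, 42, 47, 57, 145, 43, 11, 156, 5, 128, 59, 114, 69, 54, 127, 24, 21, 103, 48, 96, 104,
   131, 72, 62, 148, 162, 19, 81, 140, 60, 144, 85, 74, 115, 94, 136, 55, 158, 36, 146, 111, 16,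
   118, 20, 31, 66, 26, 41, 105, 13, 141, 91, 102, 78, 123, 79, 51, 139, 71, 99, 134, 157, 137,
   83, 101, 22, 93, 122, 8, 110, 53, 28, 7, 39, 45, 30, 151, 87, 119, 4, 52],
  [101, 74, 36, 146, 162, 62, 126, 9, 72, 13, 40, 164, 117, 159, 54, 3, 158, 94, 100, 120, 108,
   83, 114, 37, 160, 127, 111, 95, 106, 41, 59, 115, 163, 70, 145, 143, 66, 18, 34, 46, 55, 43,
   157, 88, 22, 124, 28, 1, 38, 148, 42, 79, 4, 44, 134, 65, 84, 139, 63, 82, 152, 155, 29, 128,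
   26, 50, 156, 21, 80, 107, 110, 99, 45, 151, 97, 78, 113, 47, 30, 64, 161, 136],
  [46, 51, 36, 79, 116, 19, 55, 141, 26, 138, 101, 76, 143, 144, 93, 11, 113, 82, 123, 99, 54,
   151, 102, 85, 70, 16, 133, 50, 5, 134, 28, 8, 71, 15, 111, 145, 152, 20, 67, 159, 57, 129,
   110, 147, 69, 94, 132, 91, 166, 162, 117, 74, 3, 23, 41, 66, 80, 7, 72, 150, 2, 30, 61, 64,
   135, 161, 118, 52, 38, 87, 127, 17, 81, 10, 136, 29, 163, 37, 86, 155, 9, 21, 97],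
  [152, 25, 76, 67, 122, 134, 102, 108, 13, 87, 36, 65, 38, 164, 17, 138, 29, 158, 4, 33, 139,
   90, 161, 156, 117, 100, 110, 149, 20, 75, 120, 56, 37, 40, 68, 136, 78, 63, 30, 107, 44, 166,
   14, 121, 148, 26, 83, 18, 168, 96, 62, 91, 104, 1, 64, 5, 106, 123, 86, 150, 129, 31, 19, 35,
   132, 45, 95, 50, 98, 58, 73, 59, 52, 81, 84, 16, 135, 2, 54, 34, 60, 42, 6, 10],
  [56, 34, 61, 3, 159, 90, 32, 42, 149, 31, 143, 5, 9, 170, 18, 93, 62, 82, 84, 155, 139, 66,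
   114, 44, 29, 48, 91, 83, 152, 117, 77, 99, 123, 135, 81, 151, 12, 63, 65, 20, 136, 30, 107,
   98, 10, 86, 38, 172, 140, 121, 167, 78, 73, 145, 113, 59, 53, 105, 157, 153, 87, 13, 102, 58,
   76, 134, 94, 106, 23, 127, 67, 52, 71, 15, 133, 70, 51, 19, 119, 162, 120, 112, 46, 95, 125,
   80],
  [111, 162, 8, 81, 174, 77, 61, 126, 159, 6, 136, 105, 39, 5, 94, 18, 80, 32, 121, 146, 15, 60,
   23, 67, 54, 21, 161, 129, 123, 170, 24, 69, 51, 153, 115, 64, 118, 86, 53, 173, 141, 88, 1,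
   66, 74, 30, 95, 41, 120, 158, 98, 99, 37, 17, 3, 31, 128, 139, 113, 56, 43, 133, 75, 63, 72,
   48, 93, 103, 27, 167, 144, 131, 49, 143, 102, 78, 107, 132, 125, 26, 108, 163, 165, 156, 135,
   148, 145],
  [190, 226, 40, 25, 144, 172, 60, 123, 105, 116, 212, 186, 146, 111, 219, 12, 136, 81, 39, 13,
   130, 42, 173, 113, 77, 54, 22, 167, 175, 90, 205, 23, 202, 213, 208, 185, 52, 176, 210, 75,
   211, 127, 141, 34, 180, 106, 62, 74, 222, 174, 73, 24, 156, 135, 63, 51, 163, 82, 201, 59,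
   133, 207, 94, 5, 95, 232, 121, 20, 162, 129, 132, 96, 6, 26, 143, 229, 31, 92, 98, 86, 4,
   110, 18, 206, 193, 158, 17, 15, 8, 164, 183, 47, 227, 56, 70, 181, 145, 117, 48, 216, 37, 46,
   68, 30, 50, 91, 187, 53, 217, 32, 71, 128, 66, 154, 230, 84],
  [206, 137, 70, 230, 194, 30, 173, 51, 89, 21, 68, 8, 155, 158, 116, 7, 148, 204, 42, 156, 114,
   170, 127, 13, 99, 163, 147, 229, 9, 186, 66, 81, 53, 171, 129, 55, 213, 84, 71, 92, 35, 191,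
   118, 16, 196, 12, 65, 106, 210, 88, 102, 157, 14, 182, 19, 224, 33, 181, 178, 80, 215, 10,
   211, 221, 136, 78, 141, 111, 46, 228, 75, 32, 93, 56, 200, 184, 126, 175, 108, 134, 159, 217,
   107, 109, 43, 152, 101, 195, 62, 227, 54, 177, 225, 103, 28, 29, 52, 232, 183, 69, 117, 220,
   226, 119, 57, 96, 26, 77, 143, 11, 120, 100, 85, 105, 27, 44, 167]]

lemma starters_ok : starters.all starterOK = true := by decide +kernel

/-- The operation given by a multiplication table. -/
def lookup (T : List (List ℕ)) (x y : ℕ) : ℕ := (T.getD x []).getD y 0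

/-- The row operation of a Room square of side 9. -/
def room9f : ℕ → ℕ → ℕ :=
  lookup
    [[0, 2, 1, 4, 3, 6, 5, 8, 7],
     [2, 1, 0, 5, 6, 8, 7, 4, 3],
     [1, 0, 2, 6, 8, 7, 4, 3, 5],
     [4, 5, 6, 3, 7, 0, 8, 1, 2],
     [3, 6, 8, 7, 4, 1, 2, 5, 0],
     [6, 8, 7, 0, 1, 5, 3, 2, 4],
     [5, 7, 4, 8, 2, 3, 6, 0, 1],
     [8, 4, 3, 1, 5, 2, 0, 7, 6],
     [7, 3, 5, 2, 0, 4, 1, 6, 8]]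

/-- The column operation of a Room square of side 9. -/
def room9g : ℕ → ℕ → ℕ :=
  lookup
    [[0, 3, 4, 1, 7, 2, 8, 6, 5],
     [3, 1, 5, 6, 8, 7, 0, 2, 4],
     [4, 5, 2, 0, 1, 6, 7, 8, 3],
     [1, 6, 0, 3, 2, 8, 4, 5, 7],
     [7, 8, 1, 2, 4, 3, 5, 0, 6],
     [2, 7, 6, 8, 3, 5, 1, 4, 0],
     [8, 0, 7, 4, 5, 1, 6, 3, 2],
     [6, 2, 8, 5, 0, 4, 3, 7, 1],
     [5, 4, 3, 7, 6, 0, 2, 1, 8]]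

set_option maxRecDepth 4000 in
lemma room_nine : Room 9 :=
  ⟨room9f, room9g, ⟨by decide +kernel, by decide +kernel, by decide +kernel, by decide +kernel⟩,
    ⟨by decide +kernel, by decide +kernel, by decide +kernel, by decide +kernel⟩,
    by decide +kernel⟩

lemma room_one : Room 1 :=
  ⟨fun _ _ => 0, fun _ _ => 0, by constructor <;> simp, by constructor <;> simp, by simp⟩

/-! ### Room frames with holes of size 2 -/

/-- Half of a Room frame on the vertices `0, …, N - 1`, whose holes are the pairs `{2i, 2i+1}`:
`op` colours the pairs of vertices from different holes by vertices, properly, and so that the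
hole of the colour is neither of the two holes involved. -/
structure IsFrame (N : ℕ) (op : ℕ → ℕ → ℕ) : Prop where
  lt : ∀ x < N, ∀ y < N, x / 2 ≠ y / 2 →
    op x y < N ∧ op x y / 2 ≠ x / 2 ∧ op x y / 2 ≠ y / 2
  comm : ∀ x < N, ∀ y < N, x / 2 ≠ y / 2 → op x y = op y x
  inj : ∀ x < N, ∀ y < N, ∀ z < N, x / 2 ≠ y / 2 → x / 2 ≠ z / 2 → op x y = op x z → y = z

/-- A Room frame of type `2 ^ (N / 2)`: two orthogonal colourings, where moreover the two colours
of a pair lie in different holes. -/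
structure RoomFrame (N : ℕ) (f g : ℕ → ℕ → ℕ) : Prop where
  left : IsFrame N f
  right : IsFrame N g
  ne : ∀ x < N, ∀ y < N, x / 2 ≠ y / 2 → f x y / 2 ≠ g x y / 2
  orth : ∀ x < N, ∀ y < N, ∀ x' < N, ∀ y' < N,
    x / 2 ≠ y / 2 ∧ x' / 2 ≠ y' / 2 ∧ f x y = f x' y' ∧ g x y = g x' y' →
    (x = x' ∧ y = y') ∨ (x = y' ∧ y = x')

/-- The row operation of a Room frame of type `2 ^ 5`; the entries
inside the holes are irrelevant. -/
def frame5f : ℕ → ℕ → ℕ :=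
  lookup
    [[0, 0, 4, 5, 2, 3, 8, 9, 6, 7],
     [0, 0, 6, 8, 9, 7, 5, 3, 2, 4],
     [4, 6, 0, 0, 7, 8, 9, 1, 5, 0],
     [5, 8, 0, 0, 6, 9, 4, 0, 7, 1],
     [2, 9, 7, 6, 0, 0, 1, 8, 0, 3],
     [3, 7, 8, 9, 0, 0, 0, 2, 1, 6],
     [8, 5, 9, 4, 1, 0, 0, 0, 3, 2],
     [9, 3, 1, 0, 8, 2, 0, 0, 4, 5],
     [6, 2, 5, 7, 0, 1, 3, 4, 0, 0],
     [7, 4, 0, 1, 3, 6, 2, 5, 0, 0]]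

/-- The column operation of a Room frame of type `2 ^ 5`; the entries
inside the holes are irrelevant. -/
def frame5g : ℕ → ℕ → ℕ :=
  lookup
    [[0, 0, 6, 9, 8, 7, 4, 2, 3, 5],
     [0, 0, 9, 6, 7, 8, 2, 4, 5, 3],
     [6, 9, 0, 0, 0, 1, 5, 8, 7, 4],
     [9, 6, 0, 0, 1, 0, 8, 5, 4, 7],
     [8, 7, 0, 1, 0, 0, 9, 3, 2, 6],
     [7, 8, 1, 0, 0, 0, 3, 9, 6, 2],
     [4, 2, 5, 8, 9, 3, 0, 0, 0, 1],
     [2, 4, 8, 5, 3, 9, 0, 0, 1, 0],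
     [3, 5, 7, 4, 2, 6, 0, 1, 0, 0],
     [5, 3, 4, 7, 6, 2, 1, 0, 0, 0]]

/-- The row operation of a Room frame of type `2 ^ 6`; the entries
inside the holes are irrelevant. -/
def frame6f : ℕ → ℕ → ℕ :=
  lookup
    [[0, 0, 5, 8, 3, 7, 4, 11, 10, 6, 9, 2],
     [0, 0, 10, 11, 9, 3, 8, 5, 7, 2, 6, 4],
     [5, 10, 0, 0, 1, 0, 11, 9, 6, 4, 8, 7],
     [8, 11, 0, 0, 6, 1, 10, 4, 5, 7, 0, 9],
     [3, 9, 1, 6, 0, 0, 2, 10, 0, 11, 7, 8],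
     [7, 3, 0, 1, 0, 0, 9, 8, 11, 10, 2, 6],
     [4, 8, 11, 10, 2, 9, 0, 0, 3, 1, 5, 0],
     [11, 5, 9, 4, 10, 8, 0, 0, 2, 0, 1, 3],
     [10, 7, 6, 5, 0, 11, 3, 2, 0, 0, 4, 1],
     [6, 2, 4, 7, 11, 10, 1, 0, 0, 0, 3, 5],
     [9, 6, 8, 0, 7, 2, 5, 1, 4, 3, 0, 0],
     [2, 4, 7, 9, 8, 6, 0, 3, 1, 5, 0, 0]]

/-- The column operation of a Room frame of type `2 ^ 6`; the entries
inside the holes are irrelevant. -/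
def frame6g : ℕ → ℕ → ℕ :=
  lookup
    [[0, 0, 11, 10, 9, 8, 2, 4, 3, 5, 7, 6],
     [0, 0, 9, 5, 6, 10, 4, 2, 11, 7, 8, 3],
     [11, 9, 0, 0, 8, 7, 0, 10, 4, 6, 1, 5],
     [10, 5, 0, 0, 1, 11, 8, 9, 7, 0, 6, 4],
     [9, 6, 8, 1, 0, 0, 11, 0, 10, 3, 2, 7],
     [8, 10, 7, 11, 0, 0, 1, 3, 6, 2, 9, 0],
     [2, 4, 0, 8, 11, 1, 0, 0, 5, 10, 3, 9],
     [4, 2, 10, 9, 0, 3, 0, 0, 1, 11, 5, 8],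
     [3, 11, 4, 7, 10, 6, 5, 1, 0, 0, 0, 2],
     [5, 7, 6, 0, 3, 2, 10, 11, 0, 0, 4, 1],
     [7, 8, 1, 6, 2, 9, 3, 5, 0, 4, 0, 0],
     [6, 3, 5, 4, 7, 0, 9, 8, 2, 1, 0, 0]]

set_option synthInstance.maxHeartbeats 200000 in
set_option synthInstance.maxSize 1000 in
lemma frame5_room : RoomFrame 10 frame5f frame5g :=
  ⟨⟨by decide +kernel, by decide +kernel, by decide +kernel⟩,
    ⟨by decide +kernel, by decide +kernel, by decide +kernel⟩,
    by decide +kernel, by decide +kernel⟩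

set_option synthInstance.maxHeartbeats 200000 in
set_option synthInstance.maxSize 1000 in
lemma frame6_room : RoomFrame 12 frame6f frame6g :=
  ⟨⟨by decide +kernel, by decide +kernel, by decide +kernel⟩,
    ⟨by decide +kernel, by decide +kernel, by decide +kernel⟩,
    by decide +kernel, by decide +kernel⟩

/-! ### Gluing Room squares along a truncated transversal design -/

/-- Blocks of a transversal design with six groups indexed by `0, …, 5` over `ℤ/m`: the block `B`
meets group `i < 5` in `B.1 + i * B.2` and group `5` in `B.2`. Every point is doubled, so `j` runs
over `0, …, 11` and the group of `j` is `j / 2`. -/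
def pt {m : ℕ} (B : ZMod m × ZMod m) (j : ℕ) : ZMod m :=
  if j / 2 < 5 then B.1 + (j / 2 : ℕ) * B.2 else B.2

lemma pt_inj_of_lt {m : ℕ} (hm2 : Nat.Coprime 2 m) (hm3 : Nat.Coprime 3 m)
    {B B' : ZMod m × ZMod m} {j k : ℕ} (hk : k < 12) (hjk : j / 2 < k / 2)
    (h₁ : pt B j = pt B' j) (h₂ : pt B k = pt B' k) : B = B' := by
  have hj5 : j / 2 < 5 := by omega
  have h2nd : B.2 = B'.2 := by
    by_cases hk5 : k / 2 < 5
    · simp only [pt, hj5, hk5, if_true] at h₁ h₂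
      have hu : IsUnit ((k / 2 - j / 2 : ℕ) : ZMod m) := by
        rw [ZMod.isUnit_iff_coprime]
        have h4 : Nat.Coprime 4 m := Nat.Coprime.mul_left hm2 hm2
        have hlo : 1 ≤ k / 2 - j / 2 := by omega
        have hhi : k / 2 - j / 2 ≤ 4 := by omega
        generalize k / 2 - j / 2 = d at *
        interval_cases d
        · exact Nat.coprime_one_left m
        · exact hm2
        · exact hm3
        · exact h4
      apply hu.mul_left_cancel
      rw [Nat.cast_sub hjk.le]
      linear_combination h₂ - h₁
    · simpa only [pt, hk5, if_false] using h₂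
  simp only [pt, hj5, if_true, h2nd, add_left_inj] at h₁
  exact Prod.ext h₁ h2nd

/-- Two points of different groups lie in at most one block. -/
lemma pt_inj {m : ℕ} (hm2 : Nat.Coprime 2 m) (hm3 : Nat.Coprime 3 m)
    {B B' : ZMod m × ZMod m} {j k : ℕ} (hj : j < 12) (hk : k < 12) (hjk : j / 2 ≠ k / 2)
    (h₁ : pt B j = pt B' j) (h₂ : pt B k = pt B' k) : B = B' := by
  rcases lt_or_gt_of_ne hjk with h | h
  · exact pt_inj_of_lt hm2 hm3 hk h h₁ h₂
  · exact pt_inj_of_lt hm2 hm3 hj h h₂ h₁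

/-- Two points of different groups lie in a block. -/
lemma exists_pt {m : ℕ} [NeZero m] (hm2 : Nat.Coprime 2 m) (hm3 : Nat.Coprime 3 m)
    {j k : ℕ} (hj : j < 12) (hk : k < 12) (hjk : j / 2 ≠ k / 2) (x y : ZMod m) :
    ∃ B : ZMod m × ZMod m, pt B j = x ∧ pt B k = y := by
  have hinj : Function.Injective (fun B : ZMod m × ZMod m => (pt B j, pt B k)) := fun B B' h =>
    pt_inj hm2 hm3 hj hk hjk (Prod.ext_iff.1 h).1 (Prod.ext_iff.1 h).2
  obtain ⟨B, hB⟩ := Finite.injective_iff_surjective.1 hinj (x, y)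
  exact ⟨B, (Prod.ext_iff.1 hB).1, (Prod.ext_iff.1 hB).2⟩

/-- The points of the `i`-th group, doubled, together with the point at infinity `none`. The last
group is truncated to `T`. -/
def groupSet {m : ℕ} [NeZero m] (T : Finset (ZMod m)) (i : ℕ) : Finset (Option (ℕ × ZMod m)) :=
  insertNone (({2 * i, 2 * i + 1} : Finset ℕ) ×ˢ (if i < 5 then univ else T))

/-- All points of the truncated transversal design, doubled, and the point at infinity. -/
def pointSet {m : ℕ} [NeZero m] (T : Finset (ZMod m)) : Finset (Option (ℕ × ZMod m)) :=
  insertNone ((range 10 ×ˢ univ) ∪ (({10, 11} : Finset ℕ) ×ˢ T))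

/-- The number of vertices of a doubled block: a block that misses `T` has lost its point in the
last group. -/
def blockSize {m : ℕ} (T : Finset (ZMod m)) (B : ZMod m × ZMod m) : ℕ :=
  if B.2 ∈ T then 12 else 10

open Classical in
/-- The operation that is `op i` on the `i`-th group together with infinity, and that on two
points of different groups is the frame operation `fr B` of the block `B` joining them. -/
noncomputable def glue {m : ℕ} (op : ℕ → Option (ℕ × ZMod m) → Option (ℕ × ZMod m) →
    Option (ℕ × ZMod m)) (fr : ZMod m × ZMod m → ℕ → ℕ → ℕ) :
    Option (ℕ × ZMod m) → Option (ℕ × ZMod m) → Option (ℕ × ZMod m)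
  | none, none => none
  | none, some q => op (q.1 / 2) none (some q)
  | some p, none => op (p.1 / 2) (some p) none
  | some p, some q =>
    if p.1 / 2 = q.1 / 2 then op (p.1 / 2) (some p) (some q)
    else if h : ∃ B : ZMod m × ZMod m, pt B p.1 = p.2 ∧ pt B q.1 = q.2 then
      some (fr h.choose p.1 q.1, pt h.choose (fr h.choose p.1 q.1))
    else none

lemma blockSize_le {m : ℕ} {T : Finset (ZMod m)} (B : ZMod m × ZMod m) : blockSize T B ≤ 12 := by
  unfold blockSize; split_ifs <;> omega

lemma glue_block {m : ℕ}
    {op : ℕ → Option (ℕ × ZMod m) → Option (ℕ × ZMod m) → Option (ℕ × ZMod m)}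
    {fr : ZMod m × ZMod m → ℕ → ℕ → ℕ} (hm2 : Nat.Coprime 2 m) (hm3 : Nat.Coprime 3 m)
    {B : ZMod m × ZMod m}
    {j k : ℕ} (hj : j < 12) (hk : k < 12) (hjk : j / 2 ≠ k / 2) :
    glue op fr (some (j, pt B j)) (some (k, pt B k)) =
      some (fr B j k, pt B (fr B j k)) := by
  have h : ∃ B' : ZMod m × ZMod m, pt B' j = pt B j ∧ pt B' k = pt B k := ⟨B, rfl, rfl⟩
  have hB : h.choose = B := pt_inj hm2 hm3 hj hk hjk h.choose_spec.1 h.choose_spec.2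
  rw [glue, if_neg hjk, dif_pos h, hB]

section Glue

variable {m : ℕ} [NeZero m] {T : Finset (ZMod m)}

lemma none_mem_groupSet (i : ℕ) : none ∈ groupSet T i := by simp [groupSet]

lemma some_mem_groupSet {i j : ℕ} {x : ZMod m} :
    some (j, x) ∈ groupSet T i ↔ j / 2 = i ∧ (i < 5 ∨ x ∈ T) := by
  simp only [groupSet, some_mem_insertNone, mem_product, mem_insert, mem_singleton]
  have : (j = 2 * i ∨ j = 2 * i + 1) ↔ j / 2 = i := by omega
  rw [this]
  split_ifs with h <;> simp [h]

lemma none_mem_pointSet : none ∈ pointSet T := by simp [pointSet]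

lemma some_mem_pointSet {j : ℕ} {x : ZMod m} :
    some (j, x) ∈ pointSet T ↔ j < 12 ∧ (j / 2 < 5 ∨ x ∈ T) := by
  simp only [pointSet, some_mem_insertNone, mem_union, mem_product, mem_insert, mem_singleton,
    mem_range, mem_univ, and_true]
  have h₁ : (j = 10 ∨ j = 11) ↔ j < 12 ∧ ¬ j < 10 := by omega
  have h₂ : j / 2 < 5 ↔ j < 10 := by omega
  rw [h₁, h₂]
  constructor
  · rintro (h | h)
    · exact ⟨by omega, Or.inl h⟩
    · exact ⟨h.1.1, Or.inr h.2⟩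
  · rintro ⟨h, h' | h'⟩
    · exact Or.inl h'
    · by_cases h10 : j < 10
      · exact Or.inl h10
      · exact Or.inr ⟨⟨h, h10⟩, h'⟩

lemma groupSet_subset {i : ℕ} (hi : i < 6) : groupSet T i ⊆ pointSet T := by
  rintro (_ | ⟨j, x⟩) h
  · exact none_mem_pointSet
  · rw [some_mem_groupSet] at h
    rw [some_mem_pointSet]
    obtain ⟨rfl, h⟩ := h
    exact ⟨by omega, h⟩

lemma card_groupSet (i : ℕ) :
    (groupSet T i).card = 2 * (if i < 5 then m else T.card) + 1 := by
  rw [groupSet, card_insertNone, card_product, card_pair (by omega)]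
  split_ifs <;> simp [ZMod.card]

lemma card_pointSet : (pointSet T).card = 2 * (5 * m + T.card) + 1 := by
  rw [pointSet, card_insertNone, card_union_of_disjoint, card_product, card_product,
    card_pair (by omega), card_range, card_univ, ZMod.card]
  · ring
  · rw [disjoint_left]
    rintro ⟨j, x⟩ h h'
    simp only [mem_product, mem_range, mem_insert, mem_singleton] at h h'
    omega

lemma groupSet_inter {i i' : ℕ} (hii : i ≠ i') {p : Option (ℕ × ZMod m)}
    (h : p ∈ groupSet T i) (h' : p ∈ groupSet T i') : p = none := by
  rcases p with _ | ⟨j, x⟩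
  · rfl
  · exact absurd ((some_mem_groupSet.1 h).1.symm.trans (some_mem_groupSet.1 h').1) hii

lemma pt_mem_pointSet {B : ZMod m × ZMod m} {j : ℕ} (hj : j < blockSize T B) :
    some (j, pt B j) ∈ pointSet T := by
  rw [some_mem_pointSet]
  unfold blockSize at hj
  split_ifs at hj with h
  · refine ⟨hj, ?_⟩
    by_cases h5 : j / 2 < 5
    · exact Or.inl h5
    · right; rwa [pt, if_neg h5]
  · exact ⟨by omega, Or.inl (by omega)⟩

lemma lt_blockSize {B : ZMod m × ZMod m} {j : ℕ} (h : some (j, pt B j) ∈ pointSet T) :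
    j < blockSize T B := by
  rw [some_mem_pointSet] at h
  unfold blockSize
  split_ifs with hB
  · exact h.1
  · rcases h.2 with h5 | h5
    · omega
    · by_contra hlt
      rw [pt, if_neg (by omega)] at h5
      exact hB h5

/-- Any two points lie in a common group together with infinity, or in a common block. -/
lemma pair_cases (hm2 : Nat.Coprime 2 m) (hm3 : Nat.Coprime 3 m) {p q : Option (ℕ × ZMod m)}
    (hp : p ∈ pointSet T) (hq : q ∈ pointSet T) :
    (∃ i < 6, p ∈ groupSet T i ∧ q ∈ groupSet T i) ∨
    ∃ B : ZMod m × ZMod m, ∃ j < blockSize T B, ∃ k < blockSize T B, j / 2 ≠ k / 2 ∧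
      p = some (j, pt B j) ∧ q = some (k, pt B k) := by
  rcases p with _ | ⟨j, x⟩ <;> rcases q with _ | ⟨k, y⟩
  · exact Or.inl ⟨0, by omega, none_mem_groupSet _, none_mem_groupSet _⟩
  · rw [some_mem_pointSet] at hq
    exact Or.inl ⟨k / 2, by omega, none_mem_groupSet _, some_mem_groupSet.2 ⟨rfl, hq.2⟩⟩
  · rw [some_mem_pointSet] at hp
    exact Or.inl ⟨j / 2, by omega, some_mem_groupSet.2 ⟨rfl, hp.2⟩, none_mem_groupSet _⟩
  · by_cases hjk : j / 2 = k / 2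
    · rw [some_mem_pointSet] at hp hq
      exact Or.inl ⟨j / 2, by omega, some_mem_groupSet.2 ⟨rfl, hp.2⟩,
        some_mem_groupSet.2 ⟨hjk.symm, hjk ▸ hq.2⟩⟩
    · obtain ⟨B, rfl, rfl⟩ := exists_pt hm2 hm3 (some_mem_pointSet.1 hp).1
        (some_mem_pointSet.1 hq).1 hjk x y
      exact Or.inr ⟨B, j, lt_blockSize hp, k, lt_blockSize hq, hjk, rfl, rfl⟩

variable {op : ℕ → Option (ℕ × ZMod m) → Option (ℕ × ZMod m) → Option (ℕ × ZMod m)}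
  {fr : ZMod m × ZMod m → ℕ → ℕ → ℕ}

lemma glue_group {i : ℕ} (h : IsCIQ (groupSet T i) (op i)) {p q : Option (ℕ × ZMod m)}
    (hp : p ∈ groupSet T i) (hq : q ∈ groupSet T i) : glue op fr p q = op i p q := by
  rcases p with _ | ⟨j, x⟩ <;> rcases q with _ | ⟨k, y⟩
  · rw [glue, h.idem _ hp]
  · rw [glue, (some_mem_groupSet.1 hq).1]
  · rw [glue, (some_mem_groupSet.1 hp).1]
  · rw [glue, (some_mem_groupSet.1 hp).1, (some_mem_groupSet.1 hq).1, if_pos rfl]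

/-- Gluing turns quasigroups on the groups and frames on the blocks into a quasigroup. -/
lemma isCIQ_glue (hm2 : Nat.Coprime 2 m) (hm3 : Nat.Coprime 3 m)
    (hop : ∀ i < 6, IsCIQ (groupSet T i) (op i)) (hfr : ∀ B, IsFrame (blockSize T B) (fr B)) :
    IsCIQ (pointSet T) (glue op fr) where
  mem p hp q hq := by
    rcases pair_cases hm2 hm3 hp hq with
      ⟨i, hi, hp, hq⟩ | ⟨B, j, hj, k, hk, hjk, rfl, rfl⟩
    · rw [glue_group (hop i hi) hp hq]
      exact groupSet_subset hi ((hop i hi).mem _ hp _ hq)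
    · rw [glue_block hm2 hm3 (hj.trans_le (blockSize_le B)) (hk.trans_le (blockSize_le B)) hjk]
      exact pt_mem_pointSet ((hfr B).lt _ hj _ hk hjk).1
  comm p hp q hq := by
    rcases pair_cases hm2 hm3 hp hq with
      ⟨i, hi, hp, hq⟩ | ⟨B, j, hj, k, hk, hjk, rfl, rfl⟩
    · rw [glue_group (hop i hi) hp hq, glue_group (hop i hi) hq hp, (hop i hi).comm _ hp _ hq]
    · have hj' := hj.trans_le (blockSize_le B)
      have hk' := hk.trans_le (blockSize_le B)
      rw [glue_block hm2 hm3 hj' hk' hjk, glue_block hm2 hm3 hk' hj' hjk.symm,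
        (hfr B).comm _ hj _ hk hjk]
  idem p hp := by
    rcases pair_cases hm2 hm3 hp hp with
      ⟨i, hi, hp, -⟩ | ⟨B, j, hj, k, hk, hjk, rfl, e⟩
    · rw [glue_group (hop i hi) hp hp, (hop i hi).idem _ hp]
    · exact absurd (congrArg (· / 2) (Prod.ext_iff.1 (Option.some.inj e)).1) hjk
  inj p hp₀ q hq q' hq' e := by
    -- The group of the value decides whether `p, q` come from a group or from a block.
    have mixed : ∀ i < 6, ∀ q ∈ groupSet T i, ∀ B, ∀ j < blockSize T B, ∀ k < blockSize T B,
        j / 2 ≠ k / 2 → some (j, pt B j) ∈ groupSet T i →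
        glue op fr (some (j, pt B j)) q ≠ glue op fr (some (j, pt B j)) (some (k, pt B k)) := by
      intro i hi q hq B j hj k hk hjk hp e
      have hr := (hop i hi).mem _ hp _ hq
      rw [glue_group (hop i hi) hp hq,
        glue_block hm2 hm3 (hj.trans_le (blockSize_le B)) (hk.trans_le (blockSize_le B)) hjk] at e
      rw [e, some_mem_groupSet] at hr
      rw [some_mem_groupSet] at hp
      exact ((hfr B).lt _ hj _ hk hjk).2.1 (hr.1.trans hp.1.symm)
    rcases pair_cases hm2 hm3 hp₀ hq with
      ⟨i, hi, hp, hq⟩ | ⟨B, j, hj, k, hk, hjk, rfl, rfl⟩ <;>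
    rcases pair_cases hm2 hm3 hp₀ hq' with
      ⟨i', hi', hp', hq'⟩ | ⟨B', j', hj', k', hk', hjk', ep, rfl⟩
    · rw [glue_group (hop i hi) hp hq, glue_group (hop i' hi') hp' hq'] at e
      by_cases hii : i = i'
      · subst hii
        exact (hop i hi).inj _ hp _ hq _ hq' e
      · obtain rfl := groupSet_inter hii hp hp'
        have hn : op i none q = none :=
          groupSet_inter hii ((hop i hi).mem _ hp _ hq) (e ▸ (hop i' hi').mem _ hp' _ hq')
        have h₁ := (hop i hi).inj _ hp _ hq _ hp (hn.trans ((hop i hi).idem _ hp).symm)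
        have h₂ := (hop i' hi').inj _ hp' _ hq' _ hp'
          ((e.symm.trans hn).trans ((hop i' hi').idem _ hp').symm)
        rw [h₁, h₂]
    · subst ep
      exact absurd e (mixed i hi q hq B' j' hj' k' hk' hjk' hp)
    · exact absurd e.symm (mixed i' hi' q' hq' B j hj k hk hjk hp')
    · obtain ⟨rfl, hpt⟩ := Prod.ext_iff.1 (Option.some.inj ep)
      simp only at hpt
      have hj12 := hj.trans_le (blockSize_le B)
      have hlt := (hfr B).lt _ hj _ hk hjk
      rw [glue_block hm2 hm3 hj12 (hk.trans_le (blockSize_le B)) hjk, hpt,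
        glue_block hm2 hm3 hj12 (hk'.trans_le (blockSize_le B')) hjk'] at e
      obtain ⟨e₁, e₂⟩ := Prod.ext_iff.1 (Option.some.inj e)
      simp only at e₁ e₂
      rw [← e₁] at e₂
      obtain rfl := pt_inj hm2 hm3 hj12 (hlt.1.trans_le (blockSize_le B)) hlt.2.1.symm hpt e₂
      rw [(hfr B).inj _ hj _ hk _ hk' hjk hjk' e₁]

/-- Gluing preserves orthogonality: the two values at a pair of points of one group lie in that
group or at infinity, and not both at infinity unless both points are; for a pair of points in
different groups the two values lie in different groups, hence determine the block. -/
lemma roomOn_glue (hm2 : Nat.Coprime 2 m) (hm3 : Nat.Coprime 3 m)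
    {op' : ℕ → Option (ℕ × ZMod m) → Option (ℕ × ZMod m) → Option (ℕ × ZMod m)}
    {fr' : ZMod m × ZMod m → ℕ → ℕ → ℕ}
    (hop : ∀ i < 6, RoomOn (groupSet T i) (op i) (op' i))
    (hfr : ∀ B, RoomFrame (blockSize T B) (fr B) (fr' B)) :
    RoomOn (pointSet T) (glue op fr) (glue op' fr') where
  left := isCIQ_glue hm2 hm3 (fun i hi => (hop i hi).left) (fun B => (hfr B).left)
  right := isCIQ_glue hm2 hm3 (fun i hi => (hop i hi).right) (fun B => (hfr B).right)
  orth p hp q hq p' hp' q' hq' e e' := by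
    have mixed : ∀ i < 6, ∀ p ∈ groupSet T i, ∀ q ∈ groupSet T i,
        ∀ B, ∀ j < blockSize T B, ∀ k < blockSize T B, j / 2 ≠ k / 2 →
        glue op fr p q = glue op fr (some (j, pt B j)) (some (k, pt B k)) →
        glue op' fr' p q = glue op' fr' (some (j, pt B j)) (some (k, pt B k)) → False := by
      intro i hi p hp q hq B j hj k hk hjk e e'
      have hr := (hop i hi).left.mem _ hp _ hq
      have hr' := (hop i hi).right.mem _ hp _ hq
      have hj12 := hj.trans_le (blockSize_le B)
      have hk12 := hk.trans_le (blockSize_le B)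
      rw [glue_group (hop i hi).left hp hq, glue_block hm2 hm3 hj12 hk12 hjk] at e
      rw [glue_group (hop i hi).right hp hq, glue_block hm2 hm3 hj12 hk12 hjk] at e'
      rw [e, some_mem_groupSet] at hr
      rw [e', some_mem_groupSet] at hr'
      exact (hfr B).ne _ hj _ hk hjk (hr.1.trans hr'.1.symm)
    rcases pair_cases hm2 hm3 hp hq with
      ⟨i, hi, hp, hq⟩ | ⟨B, j, hj, k, hk, hjk, rfl, rfl⟩ <;>
    rcases pair_cases hm2 hm3 hp' hq' with
      ⟨i', hi', hp', hq'⟩ | ⟨B', j', hj', k', hk', hjk', rfl, rfl⟩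
    · rw [glue_group (hop i hi).left hp hq, glue_group (hop i' hi').left hp' hq'] at e
      rw [glue_group (hop i hi).right hp hq, glue_group (hop i' hi').right hp' hq'] at e'
      by_cases hii : i = i'
      · subst hii
        exact (hop i hi).orth _ hp _ hq _ hp' _ hq' e e'
      · have hn : op i p q = none := groupSet_inter hii ((hop i hi).left.mem _ hp _ hq)
          (e ▸ (hop i' hi').left.mem _ hp' _ hq')
        have hn' : op' i p q = none := groupSet_inter hii ((hop i hi).right.mem _ hp _ hq)
          (e' ▸ (hop i' hi').right.mem _ hp' _ hq')
        have none_of : ∀ i < 6, ∀ p ∈ groupSet T i, ∀ q ∈ groupSet T i, op i p q = none →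
            op' i p q = none → p = none ∧ q = none := by
          intro i hi p hp q hq h h'
          have h0 := none_mem_groupSet (T := T) i
          have := (hop i hi).orth _ hp _ hq _ h0 _ h0 (h.trans ((hop i hi).left.idem _ h0).symm)
            (h'.trans ((hop i hi).right.idem _ h0).symm)
          tauto
        obtain ⟨rfl, rfl⟩ := none_of i hi p hp q hq hn hn'
        obtain ⟨rfl, rfl⟩ := none_of i' hi' p' hp' q' hq' (e.symm.trans hn) (e'.symm.trans hn')
        exact Or.inl ⟨rfl, rfl⟩
    · exact (mixed i hi p hp q hq B' j' hj' k' hk' hjk' e e').elim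
    · exact (mixed i' hi' p' hp' q' hq' B j hj k hk hjk e.symm e'.symm).elim
    · have hj12 := hj.trans_le (blockSize_le B)
      have hk12 := hk.trans_le (blockSize_le B)
      have hj12' := hj'.trans_le (blockSize_le B')
      have hk12' := hk'.trans_le (blockSize_le B')
      rw [glue_block hm2 hm3 hj12 hk12 hjk, glue_block hm2 hm3 hj12' hk12' hjk'] at e e'
      obtain ⟨e₁, e₂⟩ := Prod.ext_iff.1 (Option.some.inj e)
      obtain ⟨e₁', e₂'⟩ := Prod.ext_iff.1 (Option.some.inj e')
      simp only at e₁ e₂ e₁' e₂'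
      rw [← e₁] at e₂
      rw [← e₁'] at e₂'
      obtain rfl := pt_inj hm2 hm3
        (((hfr B).left.lt _ hj _ hk hjk).1.trans_le (blockSize_le B))
        (((hfr B).right.lt _ hj _ hk hjk).1.trans_le (blockSize_le B))
        ((hfr B).ne _ hj _ hk hjk) e₂ e₂'
      rcases (hfr B).orth _ hj _ hk _ hj' _ hk' ⟨hjk, hjk', e₁, e₁'⟩ with ⟨rfl, rfl⟩ | ⟨rfl, rfl⟩
      · exact Or.inl ⟨rfl, rfl⟩
      · exact Or.inr ⟨rfl, rfl⟩

end Glue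

lemma room_glue {m t : ℕ} (hm : m % 6 = 1 ∨ m % 6 = 5) (ht : t ≤ m) (h₁ : Room (2 * m + 1))
    (h₂ : Room (2 * t + 1)) : Room (2 * (5 * m + t) + 1) := by
  have : NeZero m := ⟨by omega⟩
  have hm2 : Nat.Coprime 2 m :=
    (Nat.Prime.coprime_iff_not_dvd Nat.prime_two).2 (by omega)
  have hm3 : Nat.Coprime 3 m :=
    (Nat.Prime.coprime_iff_not_dvd Nat.prime_three).2 (by omega)
  obtain ⟨T, -, rfl⟩ := Finset.exists_subset_card_eq (s := (univ : Finset (ZMod m))) (n := t)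
    (by rwa [card_univ, ZMod.card])
  have hex : ∀ i, ∃ f g : Option (ℕ × ZMod m) → Option (ℕ × ZMod m) → Option (ℕ × ZMod m),
      RoomOn (groupSet T i) f g := by
    intro i
    by_cases hi : i < 5
    · obtain ⟨f, g, h⟩ := h₁
      exact h.of_card_eq (by rw [card_groupSet, if_pos hi, card_range])
    · obtain ⟨f, g, h⟩ := h₂
      exact h.of_card_eq (by rw [card_groupSet, if_neg hi, card_range])
  choose op op' hop using hex
  have key : RoomOn (pointSet T) (glue op fun B => if B.2 ∈ T then frame6f else frame5f)
      (glue op' fun B => if B.2 ∈ T then frame6g else frame5g) := by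
    refine roomOn_glue hm2 hm3 (fun i _ => hop i) (fun B => ?_)
    unfold blockSize
    split_ifs
    · exact frame6_room
    · exact frame5_room
  exact key.of_card_eq (by rw [card_pointSet, card_range])

/-! ### Room squares of every odd side at least 7 -/

/-- For small `u`, a Room square of side `2u+1` is listed or comes from gluing with `m ≤ 25`. -/
lemma small_cases : ∀ u < 118, 3 ≤ u → u = 4 ∨ u ∈ starters.map List.length ∨
    ∃ m < 26, (m % 6 = 1 ∨ m % 6 = 5) ∧ 5 ≤ m ∧
      (u = 5 * m ∨ (5 * m + 3 ≤ u ∧ u ≤ 6 * m)) := by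
  decide +kernel

/-- Existence of Room squares of side `2u + 1`, by strong induction with the gluing step
`u = 5 * m + t`, where `t = 0` or `3 ≤ t ≤ m`. -/
lemma room_odd (u : ℕ) (hu : 3 ≤ u) : Room (2 * u + 1) := by
  induction u using Nat.strong_induction_on with
  | _ u ih =>
    have hglue : ∀ m, (m % 6 = 1 ∨ m % 6 = 5) → 5 ≤ m →
        (u = 5 * m ∨ (5 * m + 3 ≤ u ∧ u ≤ 6 * m)) → Room (2 * u + 1) := by
      rintro m hm h5 (h | ⟨h, h'⟩)
      · subst h
        exact room_glue (t := 0) hm (Nat.zero_le _) (ih m (by omega) (by omega)) room_one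
      · have := room_glue (t := u - 5 * m) hm (by omega) (ih m (by omega) (by omega))
          (ih (u - 5 * m) (by omega) (by omega))
        rwa [Nat.add_sub_cancel' (by omega)] at this
    rcases lt_or_ge u 118 with hlt | hge
    · rcases small_cases u hlt hu with rfl | h | ⟨m, -, hm, h5, h⟩
      · exact room_nine
      · obtain ⟨L, hL, rfl⟩ := List.mem_map.1 h
        exact room_of_starterOK L (List.all_eq_true.1 starters_ok L hL)
      · exact hglue m hm h5 h
    · -- the largest `m ≤ (u - 3) / 5` coprime to 6
      obtain ⟨m, hm, h₁, h₂⟩ : ∃ m, (m % 6 = 1 ∨ m % 6 = 5) ∧ 5 * m + 3 ≤ u ∧ u ≤ 6 * m := by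
        have hq : ∃ q, q = (u - 3) / 5 := ⟨_, rfl⟩
        obtain ⟨q, hq⟩ := hq
        have : q % 6 = 0 ∨ q % 6 = 1 ∨ q % 6 = 2 ∨ q % 6 = 3 ∨ q % 6 = 4 ∨ q % 6 = 5 := by omega
        rcases this with h | h | h | h | h | h
        · exact ⟨q - 1, by omega, by omega, by omega⟩
        · exact ⟨q, by omega, by omega, by omega⟩
        · exact ⟨q - 1, by omega, by omega, by omega⟩
        · exact ⟨q - 2, by omega, by omega, by omega⟩
        · exact ⟨q - 3, by omega, by omega, by omega⟩
        · exact ⟨q, by omega, by omega, by omega⟩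
      exact hglue m hm (by omega) (Or.inr ⟨h₁, h₂⟩)

/-! ### Two-fold edge colourings of complete graphs -/

/-- Every edge `{x, y}`, `x < y`, of the complete graph on `0, …, n - 1` receives a pair
`{f x y, g x y}` of colours below `c` such that edges with a common vertex receive disjoint pairs
and no pair is used twice. Such a colouring is the same as a packing with `n.choose 2` blocks. -/
structure IsColoring (n c : ℕ) (f g : ℕ → ℕ → ℕ) : Prop where
  lt : ∀ y < n, ∀ x < y, f x y < c ∧ g x y < c ∧ f x y ≠ g x y
  disj : ∀ y < n, ∀ x < y, ∀ y' < n, ∀ x' < y',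
    (x = x' ∨ x = y' ∨ y = x' ∨ y = y') ∧
    (f x y = f x' y' ∨ f x y = g x' y' ∨ g x y = f x' y' ∨ g x y = g x' y') → x = x' ∧ y = y'
  ne : ∀ y < n, ∀ x < y, ∀ y' < n, ∀ x' < y',
    (f x y = f x' y' ∧ g x y = g x' y') ∨ (f x y = g x' y' ∧ g x y = f x' y') → x = x' ∧ y = y'

lemma IsColoring.mono {n n' c c' : ℕ} {f g : ℕ → ℕ → ℕ} (h : IsColoring n c f g) (hn : n' ≤ n)
    (hc : c ≤ c') : IsColoring n' c' f g where
  lt y hy x hx := by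
    have := h.lt y (by omega) x hx
    omega
  disj y hy x hx y' hy' x' hx' := h.disj y (by omega) x hx y' (by omega) x' hx'
  ne y hy x hx y' hy' x' hx' := h.ne y (by omega) x hx y' (by omega) x' hx'

/-- The proper edge colouring of the complete graph on `0, …, n` obtained from a commutative
idempotent quasigroup on `0, …, n - 1`: the edge from `x` to `n` gets the colour missing at `x`. -/
def extendOp (n : ℕ) (op : ℕ → ℕ → ℕ) (x y : ℕ) : ℕ := if y = n then x else op x y

lemma extendOp_lt {n : ℕ} {op : ℕ → ℕ → ℕ} (h : IsCIQ (range n) op) {x y : ℕ} (hy : y < n + 1)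
    (hx : x < y) : extendOp n op x y < n := by
  unfold extendOp
  split_ifs with hn
  · omega
  · exact mem_range.1 (h.mem _ (mem_range.2 (by omega)) _ (mem_range.2 (by omega)))

lemma extendOp_inj {n : ℕ} {op : ℕ → ℕ → ℕ} (h : IsCIQ (range n) op) {x y x' y' : ℕ}
    (hy : y < n + 1) (hx : x < y) (hy' : y' < n + 1) (hx' : x' < y')
    (hs : x = x' ∨ x = y' ∨ y = x' ∨ y = y') (e : extendOp n op x y = extendOp n op x' y') :
    x = x' ∧ y = y' := by
  -- a pair never receives one of its own elements as colour
  have own : ∀ a b, a < b → b < n → op a b ≠ a ∧ op a b ≠ b := by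
    intro a b hab hb
    have ha : a ∈ range n := mem_range.2 (by omega)
    have hb : b ∈ range n := mem_range.2 hb
    refine ⟨fun e => ?_, fun e => ?_⟩
    · have := h.inj a ha b hb a ha (e.trans (h.idem a ha).symm)
      omega
    · rw [h.comm a ha b hb] at e
      have := h.inj b hb a ha b hb (e.trans (h.idem b hb).symm)
      omega
  unfold extendOp at e
  split_ifs at e with h₁ h₂ h₂
  · omega
  · have := own x' y' hx' (by omega)
    omega
  · have := own x y hx (by omega)
    omega
  · have mx : x ∈ range n := mem_range.2 (by omega)
    have my : y ∈ range n := mem_range.2 (by omega)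
    have mx' : x' ∈ range n := mem_range.2 (by omega)
    have my' : y' ∈ range n := mem_range.2 (by omega)
    rcases hs with rfl | rfl | rfl | rfl
    · exact ⟨rfl, h.inj _ mx _ my _ my' e⟩
    · rw [h.comm x' mx' _ mx] at e
      have := h.inj _ mx _ my _ mx' e
      omega
    · rw [h.comm x mx _ my] at e
      have := h.inj _ my _ mx _ my' e
      omega
    · rw [h.comm x mx _ my, h.comm x' mx' _ my] at e
      exact ⟨h.inj _ my _ mx _ mx' e, rfl⟩

/-- Rows and columns of a Room square of side `n` serve as `2n` colours for the edges of the
complete graph on `n + 1` vertices. -/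
lemma RoomOn.isColoring {n : ℕ} {f g : ℕ → ℕ → ℕ} (h : RoomOn (range n) f g) :
    IsColoring (n + 1) (2 * n) (extendOp n f) (fun x y => n + extendOp n g x y) where
  lt y hy x hx := by
    have h₁ := extendOp_lt h.left hy hx
    have h₂ := extendOp_lt h.right hy hx
    omega
  disj y hy x hx y' hy' x' hx' := by
    rintro ⟨hs, hc⟩
    have h₁ := extendOp_lt h.left hy hx
    have h₂ := extendOp_lt h.left hy' hx'
    have hc : extendOp n f x y = extendOp n f x' y' ∨ extendOp n g x y = extendOp n g x' y' := by
      omega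
    rcases hc with hc | hc
    · exact extendOp_inj h.left hy hx hy' hx' hs hc
    · exact extendOp_inj h.right hy hx hy' hx' hs hc
  ne y hy x hx y' hy' x' hx' hc := by
    have h₁ := extendOp_lt h.left hy hx
    have h₂ := extendOp_lt h.left hy' hx'
    obtain ⟨e, e'⟩ : extendOp n f x y = extendOp n f x' y' ∧
        extendOp n g x y = extendOp n g x' y' := by omega
    -- the cell `(c, c)` of the Room square is not occupied by a pair
    have diag : ∀ a b c, a < b → b < n → c < n → f a b = c → g a b = c → False := by
      intro a b c hab hb hcn ef eg
      have hc : c ∈ range n := mem_range.2 hcn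
      have := h.orth a (mem_range.2 (by omega)) b (mem_range.2 hb) c hc c hc
        (ef.trans (h.left.idem c hc).symm) (eg.trans (h.right.idem c hc).symm)
      omega
    unfold extendOp at e e'
    split_ifs at e e' with h₁ h₂ h₂
    · omega
    · exact (diag x' y' x hx' (by omega) (by omega) e.symm e'.symm).elim
    · exact (diag x y x' hx (by omega) (by omega) e e').elim
    · have := h.orth x (mem_range.2 (by omega)) y (mem_range.2 (by omega)) x'
        (mem_range.2 (by omega)) y' (mem_range.2 (by omega)) e e'
      omega

set_option synthInstance.maxSize 2000 in
set_option synthInstance.maxHeartbeats 400000 in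
lemma coloring_two : IsColoring 2 4 (lookup [[0, 0]]) (lookup [[0, 1]]) :=
  ⟨by decide +kernel, by decide +kernel, by decide +kernel⟩

set_option synthInstance.maxSize 2000 in
set_option synthInstance.maxHeartbeats 400000 in
lemma coloring_three :
    IsColoring 3 6 (lookup [[0, 0, 2], [0, 0, 4]]) (lookup [[0, 1, 3], [0, 0, 5]]) :=
  ⟨by decide +kernel, by decide +kernel, by decide +kernel⟩

set_option synthInstance.maxSize 2000 in
set_option synthInstance.maxHeartbeats 400000 in
lemma coloring_four :
    IsColoring 4 9 (lookup [[0, 0, 2, 4], [0, 0, 4, 2], [0, 0, 0, 0]])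
      (lookup [[0, 1, 3, 5], [0, 0, 6, 7], [0, 0, 0, 8]]) :=
  ⟨by decide +kernel, by decide +kernel, by decide +kernel⟩

set_option synthInstance.maxSize 2000 in
set_option synthInstance.maxHeartbeats 400000 in
lemma coloring_five :
    IsColoring 5 11
      (lookup [[0, 0, 1, 4, 2], [0, 0, 2, 3, 4], [0, 0, 0, 5, 7], [0, 0, 0, 0, 0]])
      (lookup [[0, 9, 6, 7, 3], [0, 0, 10, 8, 5], [0, 0, 0, 9, 8], [0, 0, 0, 0, 1]]) :=
  ⟨by decide +kernel, by decide +kernel, by decide +kernel⟩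

set_option synthInstance.maxSize 2000 in
set_option synthInstance.maxHeartbeats 400000 in
lemma coloring_six :
    IsColoring 6 12
      (lookup [[0, 9, 6, 4, 0, 2], [0, 0, 0, 1, 3, 4], [0, 0, 0, 3, 4, 5], [0, 0, 0, 0, 6, 8],
        [0, 0, 0, 0, 0, 10]])
      (lookup [[0, 11, 8, 5, 1, 3], [0, 0, 2, 10, 8, 6], [0, 0, 0, 11, 9, 7], [0, 0, 0, 0, 7, 9],
        [0, 0, 0, 0, 0, 11]]) :=
  ⟨by decide +kernel, by decide +kernel, by decide +kernel⟩

lemma exists_coloring (v₁ v₂ : ℕ) (h4 : 4 ≤ 2 * v₁) (h2 : 2 * v₁ ≤ v₂)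
    (hne1 : ¬(v₁ = 4 ∧ v₂ = 8)) (hne2 : ¬(v₁ = 5 ∧ v₂ = 10)) :
    ∃ f g, IsColoring v₁ v₂ f g := by
  rcases lt_or_ge v₁ 7 with h | h
  · have : v₁ = 2 ∨ v₁ = 3 ∨ v₁ = 4 ∨ v₁ = 5 ∨ v₁ = 6 := by omega
    rcases this with rfl | rfl | rfl | rfl | rfl
    · exact ⟨_, _, coloring_two.mono le_rfl (by omega)⟩
    · exact ⟨_, _, coloring_three.mono le_rfl (by omega)⟩
    · exact ⟨_, _, coloring_four.mono le_rfl (by omega)⟩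
    · exact ⟨_, _, coloring_five.mono le_rfl (by omega)⟩
    · exact ⟨_, _, coloring_six.mono le_rfl (by omega)⟩
  · -- the side is `v₁` for odd `v₁` and `v₁ - 1` for even `v₁`
    obtain ⟨f, g, hr⟩ := room_odd ((v₁ - 1) / 2) (by omega)
    exact ⟨_, _, hr.isColoring.mono (by omega) (by omega)⟩

/-! ### Packings -/

/-- A block `(A, B)` of a packing with two parts. -/
def block {v₁ v₂ : ℕ} (A : Finset (Fin v₁)) (B : Finset (Fin v₂)) :
    ∀ i : Fin 2, Finset (Fin ((![v₁, v₂] : Fin 2 → ℕ) i)) :=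
  Fin.cons (α := fun i : Fin 2 => Finset (Fin ((![v₁, v₂] : Fin 2 → ℕ) i))) A
    (Fin.cons (α := fun i : Fin 1 => Finset (Fin ((![v₁, v₂] : Fin 2 → ℕ) i.succ))) B
      (fun i => i.elim0))

/-- The decidability instances are ordinary implicit arguments, so that the instance occurring in
`IsGenPacking` is accepted. -/
lemma card_filter_le_card_filter {α : Type*} {P : Multiset α} {p q : α → Prop}
    {_ : DecidablePred p} {_ : DecidablePred q} (h : ∀ a, p a → q a) :
    Multiset.card (P.filter p) ≤ Multiset.card (P.filter q) :=
  Multiset.card_le_card (Multiset.monotone_filter_right P h)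

/-- As in `card_filter_le_card_filter`, the decidability instance is an implicit argument. -/
lemma card_filter_map_le_one {α β : Type*} {s : Finset α} {f : α → β} {p : β → Prop}
    {_ : DecidablePred p} (h : ∀ a ∈ s, ∀ b ∈ s, p (f a) → p (f b) → a = b) :
    Multiset.card ((s.val.map f).filter p) ≤ 1 := by
  rw [Multiset.filter_map, Multiset.card_map]
  change (s.filter (p ∘ f)).card ≤ 1
  rw [Finset.card_le_one]
  intro a ha b hb
  rw [mem_filter] at ha hb
  exact h a ha.1 b hb.1 ha.2 hb.2

/-- The first component of a block. -/
def firstPart {v₁ v₂ : ℕ} (B : ∀ i : Fin 2, Finset (Fin ((![v₁, v₂] : Fin 2 → ℕ) i))) :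
    Finset (Fin v₁) := B 0

/-- Upper bound: the first components of the blocks are distinct pairs. -/
lemma card_le_of_isGenPacking {v₁ v₂ : ℕ}
    {P : Multiset (∀ i : Fin 2, Finset (Fin ((![v₁, v₂] : Fin 2 → ℕ) i)))}
    (h : IsGenPacking 2 1 ![v₁, v₂] ![2, 2] P) : Multiset.card P ≤ v₁.choose 2 := by
  classical
  have hnodup : (P.map firstPart).Nodup := by
    rw [Multiset.nodup_iff_count_le_one]
    intro A
    rw [Multiset.count_map]
    by_cases hA : A.card = 2
    · have h1 := h.2 ![2, 0] (by intro i; fin_cases i <;> simp) (by simp) (block A ∅)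
        (by intro i; fin_cases i
            · exact hA
            · rfl)
      refine le_trans (card_filter_le_card_filter fun B hB i => ?_) h1
      fin_cases i
      · exact hB.le
      · exact Finset.empty_subset _
    · rw [Multiset.filter_eq_nil.2]
      · simp
      · intro B hB e
        rw [e] at hA
        exact hA (h.1 B hB 0)
  have hsub : P.map firstPart ≤
      (powersetCard 2 (univ : Finset (Fin v₁))).val := by
    rw [Multiset.le_iff_subset hnodup]
    intro A hA
    obtain ⟨B, hB, rfl⟩ := Multiset.mem_map.1 hA
    exact mem_powersetCard.2 ⟨subset_univ _, h.1 B hB 0⟩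
  have := Multiset.card_le_card hsub
  simpa using this

lemma card_lt_pairs (n : ℕ) :
    ((univ : Finset (Fin n × Fin n)).filter fun p => p.1 < p.2).card = n.choose 2 := by
  classical
  have : (powersetCard 2 (univ : Finset (Fin n))) =
      ((univ : Finset (Fin n × Fin n)).filter fun p => p.1 < p.2).image
        (fun p => ({p.1, p.2} : Finset (Fin n))) := by
    ext A
    simp only [mem_powersetCard, subset_univ, true_and, mem_image, mem_filter, mem_univ,
      Prod.exists, card_eq_two]
    constructor
    · rintro ⟨x, y, hxy, rfl⟩
      rcases lt_or_gt_of_ne hxy with h | h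
      · exact ⟨x, y, h, rfl⟩
      · exact ⟨y, x, h, pair_comm _ _⟩
    · rintro ⟨x, y, h, rfl⟩
      exact ⟨x, y, h.ne, rfl⟩
  have hc := congrArg card this
  rw [card_powersetCard, card_univ, Fintype.card_fin, card_image_of_injOn] at hc
  · exact hc.symm
  · rintro ⟨x, y⟩ h ⟨x', y'⟩ h' e
    replace h : x < y := (mem_filter.1 (mem_coe.1 h)).2
    replace h' : x' < y' := (mem_filter.1 (mem_coe.1 h')).2
    replace e : ({x, y} : Finset (Fin n)) = {x', y'} := e
    have hx : x ∈ ({x', y'} : Finset (Fin n)) := e ▸ mem_insert_self _ _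
    have hy : y ∈ ({x', y'} : Finset (Fin n)) := e ▸ mem_insert_of_mem (mem_singleton_self _)
    simp only [mem_insert, mem_singleton] at hx hy
    rw [Prod.mk.injEq]
    omega

/-- Two edges whose blocks contain a common pair of elements are equal. -/
lemma IsColoring.edge_unique {v₁ v₂ : ℕ} {f g : ℕ → ℕ → ℕ} (h : IsColoring v₁ v₂ f g)
    {T₀ : Finset (Fin v₁)} {T₁ : Finset (Fin v₂)} (hT : T₀.card + T₁.card = 2)
    {x y x' y' : Fin v₁} (hxy : x.val < y.val) (hxy' : x'.val < y'.val)
    (hp0 : ∀ a ∈ T₀, a = x ∨ a = y) (hq0 : ∀ a ∈ T₀, a = x' ∨ a = y')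
    (hp1 : ∀ b ∈ T₁, b.val = f x y ∨ b.val = g x y)
    (hq1 : ∀ b ∈ T₁, b.val = f x' y' ∨ b.val = g x' y') : x.val = x'.val ∧ y.val = y'.val := by
  have hcases : T₀.card = 2 ∨ (T₀.card = 1 ∧ T₁.card = 1) ∨ T₁.card = 2 := by omega
  rcases hcases with h0 | ⟨h0, h1⟩ | h1
  · obtain ⟨a, b, hab, rfl⟩ := card_eq_two.1 h0
    have := hp0 a (by simp)
    have := hp0 b (by simp)
    have := hq0 a (by simp)
    have := hq0 b (by simp)
    omega
  · obtain ⟨a, rfl⟩ := card_eq_one.1 h0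
    obtain ⟨b, rfl⟩ := card_eq_one.1 h1
    have := hp0 a (by simp)
    have := hq0 a (by simp)
    have := hp1 b (by simp)
    have := hq1 b (by simp)
    exact h.disj _ y.2 _ hxy _ y'.2 _ hxy' ⟨by omega, by omega⟩
  · obtain ⟨a, b, hab, rfl⟩ := card_eq_two.1 h1
    have := hp1 a (by simp)
    have := hp1 b (by simp)
    have := hq1 a (by simp)
    have := hq1 b (by simp)
    have hab' : a.val ≠ b.val := Fin.val_ne_of_ne hab
    exact h.ne _ y.2 _ hxy _ y'.2 _ hxy' (by omega)

/-- A colouring gives a packing with one block for each edge. -/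
lemma IsColoring.exists_packing {v₁ v₂ : ℕ} {f g : ℕ → ℕ → ℕ} (h : IsColoring v₁ v₂ f g) :
    ∃ P, IsGenPacking 2 1 ![v₁, v₂] ![2, 2] P ∧ Multiset.card P = v₁.choose 2 := by
  classical
  let E : Finset (Fin v₁ × Fin v₁) := univ.filter fun p => p.1 < p.2
  have hE : ∀ p ∈ E, p.1.val < p.2.val := fun p hp => (mem_filter.1 hp).2
  have hE' : ∀ p : E, p.1.1.val < p.1.2.val := fun p => hE p.1 p.2
  let bl : E → ∀ i : Fin 2, Finset (Fin ((![v₁, v₂] : Fin 2 → ℕ) i)) := fun p =>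
    block {p.1.1, p.1.2}
      {⟨f p.1.1 p.1.2, (h.lt _ p.1.2.2 _ (hE' p)).1⟩,
        ⟨g p.1.1 p.1.2, (h.lt _ p.1.2.2 _ (hE' p)).2.1⟩}
  refine ⟨E.attach.val.map bl, ⟨?_, ?_⟩, ?_⟩
  · intro B hB i
    obtain ⟨p, -, rfl⟩ := Multiset.mem_map.1 hB
    fin_cases i
    · exact card_pair (Fin.ne_of_val_ne (hE' p).ne)
    · exact card_pair (Fin.ne_of_val_ne (h.lt _ p.1.2.2 _ (hE' p)).2.2)
  · intro t' ht' hsum T hT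
    refine card_filter_map_le_one fun p _ q _ hp hq => ?_
    rw [Fin.sum_univ_two, ← hT 0, ← hT 1] at hsum
    have hs := h.edge_unique (T₀ := T 0) (T₁ := T 1) hsum (hE' p) (hE' q)
      (fun a ha => by simpa using (show a ∈ ({p.1.1, p.1.2} : Finset (Fin v₁)) from hp 0 ha))
      (fun a ha => by simpa using (show a ∈ ({q.1.1, q.1.2} : Finset (Fin v₁)) from hq 0 ha))
      (fun b hb => (mem_insert.1 (hp 1 hb)).imp (congrArg Fin.val)
        fun e => congrArg Fin.val (mem_singleton.1 e))
      (fun b hb => (mem_insert.1 (hq 1 hb)).imp (congrArg Fin.val)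
        fun e => congrArg Fin.val (mem_singleton.1 e))
    exact Subtype.ext (Prod.ext (Fin.ext hs.1) (Fin.ext hs.2))
  · rw [Multiset.card_map]
    exact (card_attach).trans (card_lt_pairs v₁)

/-- for `𝐯 = (v₁,v₂)` with `v₂ ≥ 2v₁ ≥ 4`, `(v₁,v₂) ∉ {(4,8),(5,10)}` and
`𝐤 = (2,2)`, `D(𝐯,𝐤,2) = C(v₁,2)`. -/
theorem stmt18 (v₁ v₂ : ℕ) (h4 : 4 ≤ 2 * v₁) (h2 : 2 * v₁ ≤ v₂)
    (hne1 : ¬(v₁ = 4 ∧ v₂ = 8)) (hne2 : ¬(v₁ = 5 ∧ v₂ = 10)) :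
    genPackingNumber (Fin 2) 2 1 ![v₁, v₂] ![2, 2] = v₁.choose 2 := by
  obtain ⟨f, g, hfg⟩ := exists_coloring v₁ v₂ h4 h2 hne1 hne2
  have hmax : IsGreatest {N | ∃ P, IsGenPacking 2 1 ![v₁, v₂] ![2, 2] P ∧ Multiset.card P = N}
      (v₁.choose 2) := by
    refine ⟨hfg.exists_packing, ?_⟩
    rintro N ⟨P, hP, rfl⟩
    exact card_le_of_isGenPacking hP
  exact hmax.csSup_eq
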